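/- Let α_1, α_2, α_3, β_1, β_2 be complex numbers with Re(β_1 + β_2 − α_1 − α_2 − α_3) > 0 and Re(β_2 − α_3) > 0, and such that β_1, β_2 and the lower parameters of the series on the right-hand side are not nonpositive integers and none of the Gamma factors is evaluated at a pole. Then ₃F₂(α_1,α_2,α_3; β_1,β_2; 1) = [Γ(β_2)Γ(β_1+β_2−α_1−α_2−α_3)/(Γ(β_2−α_3)Γ(β_1+β_2−α_1−α_2))]·₃F₂(β_1−α_1, β_1−α_2, α_3; β_1, β_1+β_2−α_1−α_2; 1). -/

import Mathlib

/-- The ascending Pochhammer symbol `(x)_n`. -/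
noncomputable def poch (x : ℂ) (n : ℕ) : ℂ := (ascPochhammer ℂ n).eval x

/-- The generalized hypergeometric series `₃F₂(a₁,a₂,a₃; b₁,b₂; 1)`. -/
noncomputable def F32 (a1 a2 a3 b1 b2 : ℂ) : ℂ :=
  ∑' n : ℕ, poch a1 n * poch a2 n * poch a3 n / ((n.factorial : ℂ) * poch b1 n * poch b2 n)

/-- `z` is not a nonpositive integer (i.e. `Γ` is not evaluated at a pole at `z`). -/
def NotPole (z : ℂ) : Prop := ∀ n : ℕ, z ≠ -(n : ℂ)


open Filter Topology

theorem poch_zero' (x : ℂ) : poch x 0 = 1 := by simp [poch]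

theorem poch_succ (x : ℂ) (n : ℕ) : poch x (n + 1) = poch x n * (x + n) := by
  simp [poch, ascPochhammer_succ_eval]

theorem poch_succ_left (x : ℂ) (n : ℕ) : poch x (n + 1) = x * poch (x + 1) n := by
  simp [poch, ascPochhammer_succ_left]

theorem poch_add (x : ℂ) (k m : ℕ) : poch x (k + m) = poch x k * poch (x + k) m := by
  induction m with
  | zero => simp [poch_zero']
  | succ m ih => rw [← add_assoc, poch_succ, ih, poch_succ]; push_cast; ring

theorem poch_one (n : ℕ) : poch 1 n = n.factorial := by
  induction n with
  | zero => simp [poch_zero']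
  | succ n ih => rw [poch_succ, ih, Nat.factorial_succ]; push_cast; ring

theorem poch_eq_prod (x : ℂ) (n : ℕ) : poch x n = ∏ j ∈ Finset.range n, (x + j) := by
  induction n with
  | zero => simp [poch_zero']
  | succ n ih => rw [poch_succ, ih, Finset.prod_range_succ]

theorem NotPole.add_ne {x : ℂ} (h : NotPole x) (n : ℕ) : x + n ≠ 0 := by
  intro h0; exact h n (eq_neg_of_add_eq_zero_left h0)

theorem NotPole.ne {x : ℂ} (h : NotPole x) : x ≠ 0 := by simpa using h.add_ne 0

theorem NotPole.poch_ne {x : ℂ} (h : NotPole x) (n : ℕ) : poch x n ≠ 0 := by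
  rw [poch_eq_prod]; exact Finset.prod_ne_zero_iff.2 fun j _ => h.add_ne j

theorem NotPole.add_nat {x : ℂ} (h : NotPole x) (n : ℕ) : NotPole (x + n) := by
  intro m hm
  apply h.add_ne (n + m); push_cast; linear_combination hm

theorem NotPole.add_one {x : ℂ} (h : NotPole x) : NotPole (x + 1) := by
  simpa using h.add_nat 1

theorem notPole_of_re_pos {x : ℂ} (h : 0 < x.re) : NotPole x := by
  intro n hn
  rw [hn] at h
  simp at h
  exact absurd h (by have : (0:ℝ) ≤ n := Nat.cast_nonneg n
                     linarith)

theorem NotPole.Gamma_ne {x : ℂ} (h : NotPole x) : Complex.Gamma x ≠ 0 :=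
  Complex.Gamma_ne_zero h

noncomputable def qn (s : ℂ) (n : ℕ) : ℝ :=
  ‖poch s n‖ / ((n.factorial : ℝ) * ((n : ℝ) + 1) ^ (s.re - 1))

theorem GammaSeq_poch (s : ℂ) (n : ℕ) :
    Complex.GammaSeq s n = (n : ℂ) ^ s * n.factorial / poch s (n + 1) := by
  rw [Complex.GammaSeq, poch_eq_prod]

theorem qn_tendsto {s : ℂ} (h : NotPole s) :
    Tendsto (qn s) atTop (𝓝 (‖Complex.Gamma s‖⁻¹)) := by
  rw [← tendsto_add_atTop_iff_nat 1]
  have h1 : Tendsto (fun n : ℕ => ‖Complex.GammaSeq s n‖⁻¹) atTop (𝓝 (‖Complex.Gamma s‖⁻¹)) :=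
    ((Complex.GammaSeq_tendsto_Gamma s).norm).inv₀ (norm_ne_zero_iff.2 h.Gamma_ne)
  have h2 : Tendsto (fun n : ℕ => (n : ℝ) / (n + 2)) atTop (𝓝 1) := by
    simpa using tendsto_natCast_div_add_atTop (2 : ℝ)
  have h3 : Tendsto (fun n : ℕ => ((n : ℝ) / (n + 2)) ^ s.re) atTop (𝓝 1) := by
    simpa using h2.rpow_const (p := s.re) (Or.inl one_ne_zero)
  have h4 : Tendsto (fun n : ℕ => ((n : ℝ) + 2) / (n + 1)) atTop (𝓝 1) := by
    have : Tendsto (fun n : ℕ => 1 + 1 / ((n : ℝ) + 1)) atTop (𝓝 (1 + 0)) :=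
      tendsto_const_nhds.add tendsto_one_div_add_atTop_nhds_zero_nat
    rw [add_zero] at this
    refine this.congr fun n => ?_
    have : (n : ℝ) + 1 ≠ 0 := by positivity
    field_simp; ring
  have h5 := (h1.mul h3).mul h4
  simp only [mul_one] at h5
  refine h5.congr' ?_
  filter_upwards [eventually_gt_atTop 0] with n hn
  have hn' : (0 : ℝ) < n := by exact_mod_cast hn
  have hp : ‖poch s (n + 1)‖ ≠ 0 := norm_ne_zero_iff.2 (h.poch_ne _)
  rw [GammaSeq_poch, qn, norm_div, norm_mul, Complex.norm_natCast_cpow_of_pos hn,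
    Complex.norm_natCast, Nat.factorial_succ, Real.div_rpow hn'.le (by positivity)]
  have e : ((n + 1 : ℕ) : ℝ) + 1 = n + 2 := by push_cast; ring
  rw [e, Real.rpow_sub_one (by positivity)]
  have f1 : (n : ℝ) ^ s.re ≠ 0 := (Real.rpow_pos_of_pos hn' _).ne'
  have f2 : ((n : ℝ) + 2) ^ s.re ≠ 0 := (Real.rpow_pos_of_pos (by positivity) _).ne'
  have f3 : (n.factorial : ℝ) ≠ 0 := by positivity
  push_cast
  field_simp

theorem poch_upper (s : ℂ) :
    ∃ C : ℝ, 0 ≤ C ∧ ∀ n, ‖poch s n‖ ≤ C * (n.factorial * ((n : ℝ) + 1) ^ (s.re - 1)) := by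
  have key : ∃ L, Tendsto (qn s) atTop (𝓝 L) := by
    by_cases h : NotPole s
    · exact ⟨_, qn_tendsto h⟩
    · simp only [NotPole, not_forall, not_not] at h
      obtain ⟨m, hm⟩ := h
      refine ⟨0, tendsto_const_nhds.congr' ?_⟩
      filter_upwards [eventually_gt_atTop m] with n hn
      have : poch s n = 0 := by
        rw [poch_eq_prod]
        exact Finset.prod_eq_zero (Finset.mem_range.2 hn) (by rw [hm]; ring)
      simp [qn, this]
  obtain ⟨L, hL⟩ := key
  obtain ⟨C, hC⟩ := hL.bddAbove_range
  refine ⟨C, ?_, fun n => ?_⟩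
  · refine le_trans ?_ (hC ⟨0, rfl⟩)
    unfold qn; positivity
  · have := hC ⟨n, rfl⟩
    rw [qn, div_le_iff₀ (by positivity)] at this
    exact this

theorem poch_lower {s : ℂ} (h : NotPole s) :
    ∃ C : ℝ, 0 ≤ C ∧ ∀ n, ‖poch s n‖⁻¹ ≤ C * (n.factorial * ((n : ℝ) + 1) ^ (s.re - 1))⁻¹ := by
  have hL := (qn_tendsto h).inv₀ (inv_ne_zero (norm_ne_zero_iff.2 h.Gamma_ne))
  obtain ⟨C, hC⟩ := hL.bddAbove_range
  refine ⟨C, ?_, fun n => ?_⟩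
  · refine le_trans ?_ (hC ⟨0, rfl⟩)
    simp only [qn]; positivity
  · have := hC ⟨n, rfl⟩
    simp only [qn, inv_div] at this
    rw [div_eq_mul_inv] at this
    have hp : (0:ℝ) < (n.factorial * ((n : ℝ) + 1) ^ (s.re - 1)) := by positivity
    rw [← div_eq_mul_inv, le_div_iff₀ hp, mul_comm]
    exact this

theorem rpow_summable {p : ℝ} (hp : p < -1) : Summable fun n : ℕ => ((n : ℝ) + 1) ^ p := by
  have := (summable_nat_add_iff 1).2 (Real.summable_nat_rpow.2 hp)
  simpa using this

theorem term_bound (a b c : ℂ) {d e : ℂ} (hd : NotPole d) (he : NotPole e) :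
    ∃ C : ℝ, 0 ≤ C ∧ ∀ n : ℕ, ‖poch a n * poch b n * poch c n /
      ((n.factorial : ℂ) * poch d n * poch e n)‖ ≤ C * ((n : ℝ) + 1) ^ (-1 - (d + e - a - b - c).re) := by
  obtain ⟨A, hA, hA'⟩ := poch_upper a
  obtain ⟨B, hB, hB'⟩ := poch_upper b
  obtain ⟨C, hC, hC'⟩ := poch_upper c
  obtain ⟨D, hD, hD'⟩ := poch_lower hd
  obtain ⟨E, hE, hE'⟩ := poch_lower he
  refine ⟨A * B * C * D * E, by positivity, fun n => ?_⟩
  have hx : (0 : ℝ) < (n : ℝ) + 1 := by positivity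
  have hf : (0 : ℝ) < n.factorial := by positivity
  calc _ = ‖poch a n‖ * ‖poch b n‖ * ‖poch c n‖ * ((n.factorial : ℝ)⁻¹) * ‖poch d n‖⁻¹ * ‖poch e n‖⁻¹ := by
        rw [norm_div, norm_mul, norm_mul, norm_mul, norm_mul, Complex.norm_natCast,
          div_eq_mul_inv, mul_inv, mul_inv]; ring
    _ ≤ (A * (n.factorial * ((n : ℝ) + 1) ^ (a.re - 1))) * (B * (n.factorial * ((n : ℝ) + 1) ^ (b.re - 1))) *
        (C * (n.factorial * ((n : ℝ) + 1) ^ (c.re - 1))) * ((n.factorial : ℝ)⁻¹) *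
        (D * (n.factorial * ((n : ℝ) + 1) ^ (d.re - 1))⁻¹) *
        (E * (n.factorial * ((n : ℝ) + 1) ^ (e.re - 1))⁻¹) := by
        gcongr
        · exact hA' n
        · exact hB' n
        · exact hC' n
        · exact hD' n
        · exact hE' n
    _ = _ := by
        have : -1 - (d + e - a - b - c).re = (a.re - 1) + (b.re - 1) + (c.re - 1) - (d.re - 1) - (e.re - 1) := by
          simp; ring
        rw [this]
        generalize a.re - 1 = a', b.re - 1 = b', c.re - 1 = c', d.re - 1 = d', e.re - 1 = e'
        rw [Real.rpow_sub hx, Real.rpow_sub hx, Real.rpow_add hx, Real.rpow_add hx]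
        have f1 := (Real.rpow_pos_of_pos hx d').ne'
        have f2 := (Real.rpow_pos_of_pos hx e').ne'
        field_simp

theorem term_summable {a b c d e : ℂ} (hd : NotPole d) (he : NotPole e)
    (h : 0 < (d + e - a - b - c).re) : Summable fun n : ℕ => ‖poch a n * poch b n * poch c n /
      ((n.factorial : ℂ) * poch d n * poch e n)‖ := by
  obtain ⟨C, hC, hb⟩ := term_bound a b c hd he
  exact Summable.of_nonneg_of_le (fun _ => norm_nonneg _) hb
    ((rpow_summable (by linarith)).mul_left C)

theorem notPole_one : NotPole 1 := notPole_of_re_pos (by simp)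

theorem term2_eq (a b c : ℂ) (n : ℕ) : poch a n * poch b n / ((n.factorial : ℂ) * poch c n) =
    poch a n * poch b n * poch 1 n / ((n.factorial : ℂ) * poch c n * poch 1 n) := by
  rw [mul_div_mul_right _ _ (notPole_one.poch_ne n)]

theorem term2_bound (a b : ℂ) {c : ℂ} (hc : NotPole c) :
    ∃ C : ℝ, 0 ≤ C ∧ ∀ n : ℕ, ‖poch a n * poch b n /
      ((n.factorial : ℂ) * poch c n)‖ ≤ C * ((n : ℝ) + 1) ^ (-1 - (c - a - b).re) := by
  obtain ⟨C, hC, h⟩ := term_bound a b 1 hc notPole_one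
  refine ⟨C, hC, fun n => ?_⟩
  rw [term2_eq]
  convert h n using 5
  ring

theorem term2_summable {a b c : ℂ} (hc : NotPole c) (h : 0 < (c - a - b).re) :
    Summable fun n : ℕ => ‖poch a n * poch b n / ((n.factorial : ℂ) * poch c n)‖ := by
  simp only [term2_eq]
  refine term_summable hc notPole_one ?_
  convert h using 2
  ring

theorem norm_poch_ge {x : ℝ} (hx : 0 < x) {z : ℂ} (hz : x ≤ z.re) (n : ℕ) :
    ‖poch x n‖ ≤ ‖poch z n‖ := by
  rw [poch_eq_prod, poch_eq_prod, norm_prod, norm_prod]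
  refine Finset.prod_le_prod (fun _ _ => norm_nonneg _) fun j _ => ?_
  have : (x : ℂ) + j = ((x + j : ℝ) : ℂ) := by push_cast; rfl
  rw [this, Complex.norm_real, Real.norm_of_nonneg (by positivity)]
  refine le_trans ?_ (Complex.re_le_norm _)
  simpa using hz

theorem saal (a b c : ℂ) (hc : NotPole c) (n : ℕ) :
    ∑ k ∈ Finset.range (n + 1), (poch (c - a) k * poch (c - b) k / ((k.factorial : ℂ) * poch c k)) *
      (poch (a + b - c) (n - k) / ((n - k).factorial : ℂ)) =
    poch a n * poch b n / ((n.factorial : ℂ) * poch c n) := by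
  set A : ℕ → ℂ := fun k => poch (c - a) k * poch (c - b) k / ((k.factorial : ℂ) * poch c k) with hA
  set B : ℕ → ℂ := fun k => poch (a + b - c) k / (k.factorial : ℂ) with hB
  have rA : ∀ k : ℕ, ((k : ℂ) + 1) * (c + k) * A (k + 1) = A k * ((c - a + k) * (c - b + k)) := by
    intro k
    simp only [hA, poch_succ, Nat.factorial_succ]
    have h1 := hc.poch_ne k
    have h2 := hc.add_ne k
    have h3 : (k.factorial : ℂ) ≠ 0 := by exact_mod_cast k.factorial_ne_zero
    have h4 : (k : ℂ) + 1 ≠ 0 := by exact_mod_cast k.succ_ne_zero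
    push_cast
    field_simp
  have rB : ∀ k : ℕ, ((k : ℂ) + 1) * B (k + 1) = B k * (a + b - c + k) := by
    intro k
    simp only [hB, poch_succ, Nat.factorial_succ]
    have h3 : (k.factorial : ℂ) ≠ 0 := by exact_mod_cast k.factorial_ne_zero
    have h4 : (k : ℂ) + 1 ≠ 0 := by exact_mod_cast k.succ_ne_zero
    push_cast
    field_simp
  induction n with
  | zero => simp [hA, poch_zero']
  | succ n ih =>
    change ∑ k ∈ Finset.range (n + 1), A k * B (n - k) = _ at ih
    change ∑ k ∈ Finset.range (n + 1 + 1), A k * B (n + 1 - k) = _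
    have tel : ∑ k ∈ Finset.range (n + 1), (((n : ℂ) + 1) * (c + n) * (A k * B (n + 1 - k)) -
        (a + n) * (b + n) * (A k * B (n - k))) = -(((n : ℂ) + 1) * (c + n) * A (n + 1) * B 0) := by
      have := Finset.sum_range_sub (fun k : ℕ => -((k : ℂ) * (c + k - 1) * A k * B (n + 1 - k))) (n + 1)
      simp only [Nat.sub_self] at this
      trans
      swap
      · refine this.trans ?_
        push_cast; ring
      · refine Finset.sum_congr rfl fun k hk => ?_
        obtain ⟨m, rfl⟩ := Nat.exists_eq_add_of_le (Nat.lt_succ_iff.1 (Finset.mem_range.1 hk))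
        have e1 : k + m + 1 - k = m + 1 := by omega
        have e2 : k + m - k = m := by omega
        have e3 : k + m + 1 - (k + 1) = m := by omega
        rw [e1, e2, e3]
        push_cast
        linear_combination A k * (c + 2 * k + m) * rB m + B m * rA k
    rw [Finset.sum_sub_distrib, ← Finset.mul_sum, ← Finset.mul_sum, ih] at tel
    rw [Finset.sum_range_succ, Nat.sub_self]
    have h1 := hc.poch_ne n
    have h2 := hc.add_ne n
    have h3 : (n.factorial : ℂ) ≠ 0 := by exact_mod_cast n.factorial_ne_zero
    have h4 : (n : ℂ) + 1 ≠ 0 := by exact_mod_cast n.succ_ne_zero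
    have : ((n : ℂ) + 1) * (c + n) ≠ 0 := mul_ne_zero h4 h2
    apply mul_left_cancel₀ this
    rw [poch_succ, poch_succ, poch_succ, Nat.factorial_succ]
    have e : ((n : ℂ) + 1) * (c + n) * (poch a n * (a + n) * (poch b n * (b + n)) /
        (((n + 1) * n.factorial : ℕ) * (poch c n * (c + n)))) =
        (a + n) * (b + n) * (poch a n * poch b n / (n.factorial * poch c n)) := by
      push_cast; field_simp
    rw [e]
    linear_combination tel

theorem poch_shift {c : ℂ} (hc : NotPole c) (n : ℕ) :
    poch (c + 1) n = poch c n * (c + n) / c := by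
  rw [eq_div_iff hc.ne, ← poch_succ, poch_succ_left]; ring

theorem gauss_rec {a b c : ℂ} (hc : NotPole c) (h : 0 < (c - a - b).re) :
    c * (c - a - b) * ∑' n : ℕ, poch a n * poch b n / ((n.factorial : ℂ) * poch c n) =
    (c - a) * (c - b) * ∑' n : ℕ, poch a n * poch b n / ((n.factorial : ℂ) * poch (c + 1) n) := by
  have s1 := (term2_summable hc h).of_norm
  have h' : 0 < (c + 1 - a - b).re := by simp at h ⊢; linarith
  have s2 := (term2_summable hc.add_one h').of_norm
  have t := ((s1.hasSum.mul_left (c * (c - a - b))).sub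
    (s2.hasSum.mul_left ((c - a) * (c - b)))).tendsto_sum_nat
  rw [← sub_eq_zero]
  refine tendsto_nhds_unique t ?_
  set G : ℕ → ℂ := fun n => -(c * n * (poch a n * poch b n / ((n.factorial : ℂ) * poch c n))) with hG
  have e : ∀ N, ∑ n ∈ Finset.range N, (c * (c - a - b) * (poch a n * poch b n / ((n.factorial : ℂ) * poch c n))
      - (c - a) * (c - b) * (poch a n * poch b n / ((n.factorial : ℂ) * poch (c + 1) n))) = G N := by
    intro N
    have := Finset.sum_range_sub G N
    rw [show G 0 = 0 by simp [hG], sub_zero] at this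
    rw [← this]
    refine Finset.sum_congr rfl fun k _ => ?_
    simp only [hG, poch_succ, Nat.factorial_succ, poch_shift hc]
    have h1 := hc.poch_ne k
    have h2 := hc.add_ne k
    have h5 := hc.ne
    have h3 : (k.factorial : ℂ) ≠ 0 := by exact_mod_cast k.factorial_ne_zero
    have h4 : (k : ℂ) + 1 ≠ 0 := by exact_mod_cast k.succ_ne_zero
    push_cast
    field_simp
    ring
  simp only [e]
  obtain ⟨C, hC, hb⟩ := term2_bound a b hc
  apply squeeze_zero_norm (a := fun n : ℕ => ‖c‖ * C * ((n : ℝ) + 1) ^ (-(c - a - b).re))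
  · intro n
    have hx : (0 : ℝ) < (n : ℝ) + 1 := by positivity
    simp only [hG, norm_neg]
    rw [norm_mul, norm_mul, Complex.norm_natCast]
    calc _ ≤ ‖c‖ * (n + 1) * (C * ((n : ℝ) + 1) ^ (-1 - (c - a - b).re)) := by
          gcongr
          · linarith
          · exact hb n
      _ = _ := by
          rw [show -1 - (c - a - b).re = -(c - a - b).re - 1 by ring, Real.rpow_sub_one hx.ne']
          field_simp
  · have := ((tendsto_rpow_neg_atTop h).comp
      (tendsto_atTop_add_const_right atTop (1 : ℝ) tendsto_natCast_atTop_atTop)).const_mul (‖c‖ * C)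
    simpa [Function.comp_def] using this

theorem gauss_iter {a b c : ℂ} (hc : NotPole c) (h : 0 < (c - a - b).re) (N : ℕ) :
    ∑' n : ℕ, poch a n * poch b n / ((n.factorial : ℂ) * poch c n) =
    poch (c - a) N * poch (c - b) N / (poch c N * poch (c - a - b) N) *
      ∑' n : ℕ, poch a n * poch b n / ((n.factorial : ℂ) * poch (c + N) n) := by
  induction N with
  | zero => simp [poch_zero']
  | succ N ih =>
    have h' : 0 < (c + N - a - b).re := by
      have : (0:ℝ) ≤ N := Nat.cast_nonneg N
      simp at h ⊢; linarith
    have r := gauss_rec (hc.add_nat N) h'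
    have hs := notPole_of_re_pos h
    have h1 := hc.poch_ne N
    have h2 := hc.add_ne N
    have h3 := hs.poch_ne N
    have h4 := hs.add_ne N
    rw [ih, poch_succ, poch_succ, poch_succ, poch_succ]
    rw [show c + ((N + 1 : ℕ) : ℂ) = c + N + 1 by push_cast; ring]
    generalize (∑' n : ℕ, poch a n * poch b n / ((n.factorial : ℂ) * poch (c + N) n)) = X at *
    generalize (∑' n : ℕ, poch a n * poch b n / ((n.factorial : ℂ) * poch (c + N + 1) n)) = Y at *
    field_simp
    linear_combination poch (c - a) N * poch (c - b) N * r

theorem gauss_lim {a b c : ℂ} :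
    Tendsto (fun N : ℕ => ∑' n : ℕ, poch a n * poch b n / ((n.factorial : ℂ) * poch (c + N) n))
      atTop (𝓝 1) := by
  obtain ⟨x, hx⟩ := exists_gt (max 1 (a + b).re)
  have hx1 : 1 < x := lt_of_le_of_lt (le_max_left _ _) hx
  have hx2 : (a + b).re < x := lt_of_le_of_lt (le_max_right _ _) hx
  have hxp : NotPole (x : ℂ) := notPole_of_re_pos (by simp; linarith)
  have hs := term2_summable (a := a) (b := b) hxp (by simp at hx2 ⊢; linarith)
  have key : Tendsto (fun N : ℕ => ∑' n : ℕ, poch a n * poch b n / ((n.factorial : ℂ) * poch (c + N) n))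
      atTop (𝓝 (∑' n : ℕ, if n = 0 then (1 : ℂ) else 0)) := by
    refine tendsto_tsum_of_dominated_convergence hs ?_ ?_
    · intro n
      rcases n with _ | n
      · simp [poch_zero']
      · simp only [Nat.add_eq_zero_iff, one_ne_zero, and_false, if_false]
        have hp : Tendsto (fun N : ℕ => ‖poch (c + N) (n + 1)‖) atTop atTop := by
          refine tendsto_atTop_mono' atTop (f₁ := fun N : ℕ => c.re + N) ?_
            (tendsto_atTop_add_const_left _ _ tendsto_natCast_atTop_atTop)
          filter_upwards [(tendsto_atTop_add_const_left atTop c.re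
            tendsto_natCast_atTop_atTop).eventually_ge_atTop 1] with N hN
          rw [poch_succ_left, norm_mul]
          have e1 : c.re + N ≤ ‖c + N‖ := by
            have := Complex.re_le_norm (c + N); simpa using this
          have e2 : 1 ≤ ‖poch (c + N + 1) n‖ := by
            have := norm_poch_ge (x := 1) one_pos (z := c + N + 1) (by simp; linarith) n
            refine le_trans ?_ this
            simp only [Complex.ofReal_one, poch_one, Complex.norm_natCast]
            exact_mod_cast Nat.one_le_iff_ne_zero.2 n.factorial_ne_zero
          nlinarith
        rw [tendsto_zero_iff_norm_tendsto_zero]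
        simp only [norm_div, norm_mul, ← div_div]
        exact hp.const_div_atTop _
    · filter_upwards [(tendsto_atTop_add_const_left atTop c.re
            tendsto_natCast_atTop_atTop).eventually_ge_atTop x] with N hN n
      rw [norm_div, norm_div, norm_mul (n.factorial : ℂ) (poch (c + N) n),
        norm_mul (n.factorial : ℂ) (poch x n)]
      have := norm_poch_ge (x := x) (by linarith) (z := c + N) (by simpa using hN) n
      have h0 : 0 < ‖poch x n‖ := norm_pos_iff.2 (hxp.poch_ne n)
      have h3 : (0:ℝ) < ‖(n.factorial : ℂ)‖ := by
        rw [Complex.norm_natCast]; exact_mod_cast n.factorial_pos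
      gcongr
  simpa using key

theorem gauss {a b c : ℂ} (hc : NotPole c) (h : 0 < (c - a - b).re) (ha : NotPole (c - a))
    (hb : NotPole (c - b)) :
    ∑' n : ℕ, poch a n * poch b n / ((n.factorial : ℂ) * poch c n) =
    Complex.Gamma c * Complex.Gamma (c - a - b) / (Complex.Gamma (c - a) * Complex.Gamma (c - b)) := by
  have hs := notPole_of_re_pos h
  have t := (((Complex.GammaSeq_tendsto_Gamma c).mul (Complex.GammaSeq_tendsto_Gamma (c - a - b))).div
    ((Complex.GammaSeq_tendsto_Gamma (c - a)).mul (Complex.GammaSeq_tendsto_Gamma (c - b)))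
    (mul_ne_zero ha.Gamma_ne hb.Gamma_ne)).mul
    ((tendsto_add_atTop_iff_nat 1).2 (gauss_lim (a := a) (b := b) (c := c)))
  rw [mul_one] at t
  refine tendsto_nhds_unique (tendsto_const_nhds.congr' ?_) t
  filter_upwards [eventually_gt_atTop 0] with N hN
  rw [gauss_iter hc h (N + 1)]
  congr 1
  simp only [Pi.mul_apply, Pi.div_apply, GammaSeq_poch]
  have hN' : (N : ℂ) ≠ 0 := by exact_mod_cast hN.ne'
  have h1 := hc.poch_ne (N + 1)
  have h2 := hs.poch_ne (N + 1)
  have h3 := ha.poch_ne (N + 1)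
  have h4 := hb.poch_ne (N + 1)
  have h5 : (N.factorial : ℂ) ≠ 0 := by exact_mod_cast N.factorial_ne_zero
  have p : (N : ℂ) ^ c * (N : ℂ) ^ (c - a - b) = (N : ℂ) ^ (c - a) * (N : ℂ) ^ (c - b) := by
    rw [← Complex.cpow_add _ _ hN', ← Complex.cpow_add _ _ hN']; congr 1; ring
  have q1 : (N : ℂ) ^ c ≠ 0 := by simp [Complex.cpow_eq_zero_iff, hN']
  have q2 : (N : ℂ) ^ (c - a - b) ≠ 0 := by simp [Complex.cpow_eq_zero_iff, hN']
  have q3 : (N : ℂ) ^ (c - a) ≠ 0 := by simp [Complex.cpow_eq_zero_iff, hN']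
  have q4 : (N : ℂ) ^ (c - b) ≠ 0 := by simp [Complex.cpow_eq_zero_iff, hN']
  generalize (N : ℂ) ^ c = x1, (N : ℂ) ^ (c - a - b) = x2, (N : ℂ) ^ (c - a) = x3,
    (N : ℂ) ^ (c - b) = x4 at *
  field_simp
  rw [p]

def Idn (a b d c e L : ℂ) : Prop :=
  F32 a b c d e = Complex.Gamma e * Complex.Gamma (L - c) /
    (Complex.Gamma (e - c) * Complex.Gamma L) * F32 (d - a) (d - b) c d L

theorem Gamma_poch {z : ℂ} (hz : NotPole z) (k : ℕ) :
    Complex.Gamma (z + k) = poch z k * Complex.Gamma z := by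
  induction k with
  | zero => simp [poch_zero']
  | succ k ih =>
    rw [poch_succ]; push_cast
    rw [← add_assoc, Complex.Gamma_add_one _ (hz.add_ne k), ih]; ring

theorem double_summable {a b c d e : ℂ} (hd : NotPole d) (he : NotPole e)
    (hl : 2 * |(a + b - d).re| < (e - c).re) :
    Summable fun p : ℕ × ℕ => (poch (d - a) p.1 * poch (d - b) p.1 / ((p.1.factorial : ℂ) * poch d p.1)) *
      (poch (a + b - d) p.2 / (p.2.factorial : ℂ)) * (poch c (p.1 + p.2) / poch e (p.1 + p.2)) := by
  obtain ⟨A, hA, hA'⟩ := term2_bound (d - a) (d - b) hd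
  obtain ⟨B, hB, hB'⟩ := poch_upper (a + b - d)
  obtain ⟨W, hW, hW'⟩ := term2_bound c 1 he
  set u := (a + b - d).re with hu
  set δ := (e - c).re with hδ
  have hu1 : u ≤ |u| := le_abs_self u
  have hu2 : -u ≤ |u| := neg_le_abs u
  have hu0 : 0 ≤ |u| := abs_nonneg u
  have S1 : Summable fun k : ℕ => A * ((k : ℝ) + 1) ^ (-1 - u - δ / 2) :=
    (rpow_summable (by linarith)).mul_left A
  have S2 : Summable fun k : ℕ => B * W * ((k : ℝ) + 1) ^ (u - 1 - δ / 2) :=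
    (rpow_summable (by linarith)).mul_left (B * W)
  have S := S1.mul_of_nonneg S2 (fun k => by positivity) (fun k => by positivity)
  refine Summable.of_norm_bounded S ?_
  rintro ⟨k, m⟩
  have hk : (0 : ℝ) < (k : ℝ) + 1 := by positivity
  have hm : (0 : ℝ) < (m : ℝ) + 1 := by positivity
  have hkm : (0 : ℝ) < ((k + m : ℕ) : ℝ) + 1 := by positivity
  have b1 : ‖poch (d - a) k * poch (d - b) k / ((k.factorial : ℂ) * poch d k)‖ ≤
      A * ((k : ℝ) + 1) ^ (-1 - u) := by
    convert hA' k using 4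
    rw [hu]; congr 1; ring
  have b2 : ‖poch (a + b - d) m / (m.factorial : ℂ)‖ ≤ B * ((m : ℝ) + 1) ^ (u - 1) := by
    rw [norm_div, Complex.norm_natCast, div_le_iff₀ (by positivity)]
    refine (hB' m).trans (le_of_eq ?_)
    ring
  have b3 : ‖poch c (k + m) / poch e (k + m)‖ ≤
      W * (((k : ℝ) + 1) ^ (-(δ / 2)) * ((m : ℝ) + 1) ^ (-(δ / 2))) := by
    have := hW' (k + m)
    have e1 : poch c (k + m) * poch 1 (k + m) / (((k + m).factorial : ℂ) * poch e (k + m)) =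
        poch c (k + m) / poch e (k + m) := by
      rw [poch_one, mul_comm, mul_div_mul_left]
      exact_mod_cast (k + m).factorial_ne_zero
    rw [e1] at this
    refine this.trans ?_
    have e2 : -1 - (e - c - 1).re = -(δ / 2) + -(δ / 2) := by
      rw [hδ]; simp; ring
    rw [e2, Real.rpow_add hkm]
    have m1 : (k : ℝ) ≤ ((k + m : ℕ) : ℝ) := by exact_mod_cast Nat.le_add_right k m
    have m2 : (m : ℝ) ≤ ((k + m : ℕ) : ℝ) := by exact_mod_cast Nat.le_add_left m k
    have r1 : (((k + m : ℕ) : ℝ) + 1) ^ (-(δ / 2)) ≤ ((k : ℝ) + 1) ^ (-(δ / 2)) :=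
      Real.rpow_le_rpow_of_nonpos hk (by linarith) (by linarith)
    have r2 : (((k + m : ℕ) : ℝ) + 1) ^ (-(δ / 2)) ≤ ((m : ℝ) + 1) ^ (-(δ / 2)) :=
      Real.rpow_le_rpow_of_nonpos hm (by linarith) (by linarith)
    gcongr
  simp only
  rw [norm_mul, norm_mul]
  calc _ ≤ (A * ((k : ℝ) + 1) ^ (-1 - u)) * (B * ((m : ℝ) + 1) ^ (u - 1)) *
        (W * (((k : ℝ) + 1) ^ (-(δ / 2)) * ((m : ℝ) + 1) ^ (-(δ / 2)))) := by gcongr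
    _ = _ := by
      rw [sub_eq_add_neg (-1 - u), sub_eq_add_neg (u - 1), Real.rpow_add hk, Real.rpow_add hm]
      ring

theorem main_large {a b c d e L : ℂ} (hL : L = d + e - a - b) (h1 : 0 < (L - c).re)
    (h2 : 0 < (e - c).re) (hd : NotPole d) (he : NotPole e) (hl : NotPole L)
    (hlarge : 2 * |(a + b - d).re| < (e - c).re) : Idn a b d c e L := by
  have S := double_summable (c := c) hd he hlarge
  set A : ℕ → ℂ := fun k => poch (d - a) k * poch (d - b) k / ((k.factorial : ℂ) * poch d k) with hA
  set B : ℕ → ℂ := fun k => poch (a + b - d) k / (k.factorial : ℂ) with hB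
  set w : ℕ → ℂ := fun n => poch c n / poch e n with hw
  change Summable (fun p : ℕ × ℕ => A p.1 * B p.2 * w (p.1 + p.2)) at S
  have T1 : ∑' p : ℕ × ℕ, A p.1 * B p.2 * w (p.1 + p.2) = F32 a b c d e := by
    rw [← Finset.HasAntidiagonal.sigmaAntidiagonalEquivProd.tsum_eq
      (fun p : ℕ × ℕ => A p.1 * B p.2 * w (p.1 + p.2))]
    refine (Summable.tsum_sigma' (fun n => (hasSum_fintype _).summable)
      (Finset.HasAntidiagonal.sigmaAntidiagonalEquivProd.summable_iff.2 S)).trans ?_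
    unfold F32
    refine tsum_congr fun n => ?_
    rw [tsum_fintype]
    have e1 : ∀ x : Finset.HasAntidiagonal.antidiagonal n,
        (A (x : ℕ × ℕ).1 * B (x : ℕ × ℕ).2 * w ((x : ℕ × ℕ).1 + (x : ℕ × ℕ).2)) =
        A (x : ℕ × ℕ).1 * B (x : ℕ × ℕ).2 * w n := by
      intro x; rw [Finset.HasAntidiagonal.mem_antidiagonal.1 x.2]
    trans ∑ x : Finset.HasAntidiagonal.antidiagonal n, A (x : ℕ × ℕ).1 * B (x : ℕ × ℕ).2 * w n
    · exact Finset.sum_congr rfl fun x _ => e1 x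
    rw [Finset.sum_coe_sort (Finset.HasAntidiagonal.antidiagonal n) (fun x : ℕ × ℕ => A x.1 * B x.2 * w n),
      ← Finset.sum_mul, Finset.Nat.sum_antidiagonal_eq_sum_range_succ (fun i j => A i * B j)]
    have := saal a b d hd n
    change ∑ k ∈ Finset.range (n + 1), A k * B (n - k) = _ at this
    rw [Nat.succ_eq_add_one, this, hw]
    simp only
    rw [div_mul_div_comm]
  unfold Idn
  rw [← T1, S.tsum_prod]
  unfold F32
  rw [← tsum_mul_left]
  refine tsum_congr fun k => ?_
  have g := gauss (a := c + k) (b := a + b - d) (he.add_nat k)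
    (by rw [show e + k - (c + k) - (a + b - d) = L - c by rw [hL]; ring]; exact h1)
    (by rw [show e + k - (c + k) = e - c by ring]; exact notPole_of_re_pos h2)
    (by rw [show e + k - (a + b - d) = L + k by rw [hL]; ring]; exact hl.add_nat k)
  rw [show e + k - (c + k) - (a + b - d) = L - c by rw [hL]; ring,
    show e + k - (c + k) = e - c by ring, show e + k - (a + b - d) = L + k by rw [hL]; ring,
    Gamma_poch he, Gamma_poch hl] at g
  have e2 : ∀ m : ℕ, A k * B m * w (k + m) = A k * w k *
      (poch (c + k) m * poch (a + b - d) m / ((m.factorial : ℂ) * poch (e + k) m)) := by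
    intro m
    simp only [hB, hw, poch_add]
    rw [← div_mul_div_comm (poch c k)]
    rw [mul_comm (poch (c + k) m) (poch (a + b - d) m), ← div_mul_div_comm (poch (a + b - d) m)]
    ring
  simp only [e2]
  rw [tsum_mul_left, g]
  simp only [hA, hw]
  have n1 := he.poch_ne k
  have n2 := hl.poch_ne k
  have n3 := hd.poch_ne k
  have n4 := hl.Gamma_ne
  have n5 := (notPole_of_re_pos h2).Gamma_ne
  have n6 : (k.factorial : ℂ) ≠ 0 := by exact_mod_cast k.factorial_ne_zero
  field_simp

theorem F32_diff {a b c d : ℂ} {x : ℝ} (hd : NotPole d) (hx : 0 < x)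
    (h : 0 < (d + x - a - b - c).re) :
    DifferentiableOn ℂ (fun z => F32 a b c d z) {z | x < z.re} := by
  have hxp : NotPole (x : ℂ) := notPole_of_re_pos (by simpa using hx)
  unfold F32
  refine Complex.differentiableOn_tsum_of_summable_norm (term_summable hd hxp h) ?_
    (isOpen_lt continuous_const Complex.continuous_re) ?_
  · intro n
    have hp : Differentiable ℂ fun z => poch z n := by
      unfold poch; exact (ascPochhammer ℂ n).differentiable
    intro z hz
    have hz' : NotPole z := notPole_of_re_pos (hx.trans hz)
    refine DifferentiableAt.differentiableWithinAt ?_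
    refine (differentiableAt_const _).div ((differentiableAt_const _).mul (hp z)) ?_
    have n6 : (n.factorial : ℂ) ≠ 0 := by exact_mod_cast n.factorial_ne_zero
    exact mul_ne_zero (mul_ne_zero n6 (hd.poch_ne n)) (hz'.poch_ne n)
  · intro n z hz
    rw [← div_div, ← div_div _ _ (poch x n), norm_div, norm_div _ (poch x n)]
    have := norm_poch_ge hx (le_of_lt hz) n
    have h0 : 0 < ‖poch x n‖ := norm_pos_iff.2 (hxp.poch_ne n)
    gcongr

theorem main_pos {a b c d e L : ℂ} (hL : L = d + e - a - b) (h1 : 0 < (L - c).re)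
    (h2 : 0 < (e - c).re) (hd : NotPole d) (he : 0 < e.re) (hl : 0 < L.re) : Idn a b d c e L := by
  obtain ⟨x, hx, hxe⟩ := exists_between (show
    max (max 0 (a + b - d).re) (max c.re (c + (a + b - d)).re) < e.re by
      subst hL
      simp at *
      refine ⟨⟨?_, ?_⟩, ?_, ?_⟩ <;> linarith)
  simp only [max_lt_iff] at hx
  obtain ⟨⟨x0, x1⟩, x2, x3⟩ := hx
  simp at x1 x3
  set U : Set ℂ := {z | x < z.re} with hU
  have Uo : IsOpen U := isOpen_lt continuous_const Complex.continuous_re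
  have Uc : IsPreconnected U := (convex_halfSpace_re_gt x).isPreconnected
  have D1 : DifferentiableOn ℂ (fun z => F32 a b c d z) U :=
    F32_diff hd x0 (by simp; linarith)
  have D2 : DifferentiableOn ℂ (fun z => F32 (d - a) (d - b) c d (d + z - a - b)) U := by
    have := F32_diff (a := d - a) (b := d - b) (c := c) (d := d) (x := x - (a + b - d).re) hd
      (by simp; linarith) (by simp; linarith)
    refine this.comp (f := fun z => d + z - a - b) (by fun_prop) ?_
    intro z hz
    simp [hU] at hz ⊢; linarith
  have DG : ∀ k : ℂ, (k + x).re ≥ 0 → DifferentiableOn ℂ (fun z => Complex.Gamma (k + z)) U := by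
    intro k hk z hz
    refine DifferentiableAt.differentiableWithinAt ?_
    have hp : NotPole (k + z) := notPole_of_re_pos (by simp [hU] at hk hz ⊢; linarith)
    exact (Complex.differentiableAt_Gamma _ hp).comp z (by fun_prop)
  have NG : ∀ k : ℂ, (k + x).re ≥ 0 → ∀ z ∈ U, Complex.Gamma (k + z) ≠ 0 := by
    intro k hk z hz
    exact (notPole_of_re_pos (by simp [hU] at hk hz ⊢; linarith)).Gamma_ne
  have k1 : ((0 : ℂ) + x).re ≥ 0 := by simp; linarith
  have k2 : (d - a - b - c + x).re ≥ 0 := by simp; linarith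
  have k3 : (-c + x).re ≥ 0 := by simp; linarith
  have k4 : (d - a - b + x).re ≥ 0 := by simp; linarith
  have D3 : DifferentiableOn ℂ (fun z => Complex.Gamma (0 + z) * Complex.Gamma (d - a - b - c + z) /
    (Complex.Gamma (-c + z) * Complex.Gamma (d - a - b + z)) *
      F32 (d - a) (d - b) c d (d + z - a - b)) U :=
    (((DG _ k1).mul (DG _ k2)).div ((DG _ k3).mul (DG _ k4))
      (fun z hz => mul_ne_zero (NG _ k3 z hz) (NG _ k4 z hz))).mul D2
  have eqv : ∀ z, Idn a b d c z (d + z - a - b) ↔ F32 a b c d z =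
      Complex.Gamma (0 + z) * Complex.Gamma (d - a - b - c + z) /
    (Complex.Gamma (-c + z) * Complex.Gamma (d - a - b + z)) *
      F32 (d - a) (d - b) c d (d + z - a - b) := by
    intro z
    unfold Idn
    rw [show 0 + z = z by ring, show d - a - b - c + z = d + z - a - b - c by ring,
      show -c + z = z - c by ring, show d - a - b + z = d + z - a - b by ring]
  obtain ⟨R, hR⟩ := exists_gt (max x (c.re + 2 * |(a + b - d).re|))
  obtain ⟨R1, R2⟩ := max_lt_iff.1 hR
  have Vo : IsOpen {z : ℂ | R < z.re} := isOpen_lt continuous_const Complex.continuous_re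
  have E := (D1.analyticOnNhd Uo).eqOn_of_preconnected_of_eventuallyEq (D3.analyticOnNhd Uo) Uc
    (z₀ := ((R + 1 : ℝ) : ℂ)) (by simp [hU]; linarith) ?_ (show e ∈ U from hxe)
  · subst hL
    exact (eqv e).2 E
  · filter_upwards [Vo.mem_nhds (show ((R + 1 : ℝ) : ℂ) ∈ {z : ℂ | R < z.re} by simp)] with z hz
    have hz' : R < z.re := hz
    refine (eqv z).1 (main_large rfl ?_ ?_ hd (notPole_of_re_pos ?_) (notPole_of_re_pos ?_) ?_)
    · simp; linarith
    · simp; linarith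
    · linarith
    · simp; linarith
    · rw [Complex.sub_re z]; linarith

theorem contig {a b c d e : ℂ} (hd : NotPole d) (he : NotPole e)
    (h : 0 < (d + e - a - b - c).re) :
    e * F32 a b c d e = (e - c) * F32 a b c d (e + 1) + c * F32 a b (c + 1) d (e + 1) := by
  have s1 := (term_summable (a := a) (b := b) (c := c) hd he.add_one
    (by simp at h ⊢; linarith)).of_norm
  have s2 := (term_summable (a := a) (b := b) (c := c + 1) hd he.add_one
    (by simp at h ⊢; linarith)).of_norm
  unfold F32
  rw [← tsum_mul_left, ← tsum_mul_left, ← tsum_mul_left,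
    ← (s1.mul_left _).tsum_add (s2.mul_left _)]
  refine tsum_congr fun n => ?_
  have hc : c * poch (c + 1) n = poch c n * (c + n) := by rw [← poch_succ, poch_succ_left]
  have n1 := he.poch_ne n
  have n2 := he.add_ne n
  have n3 := hd.poch_ne n
  have n4 := he.ne
  have n6 : (n.factorial : ℂ) ≠ 0 := by exact_mod_cast n.factorial_ne_zero
  rw [poch_shift he]
  field_simp
  linear_combination -(poch a n * poch b n) * hc

theorem Idn_step {a b c d e L : ℂ} (hL : L = d + e - a - b) (h1 : 0 < (L - c).re)
    (h2 : 0 < (e - c).re) (hd : NotPole d) (he : NotPole e) (hl : NotPole L)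
    (i1 : Idn a b d c (e + 1) (L + 1)) (i2 : Idn a b d (c + 1) (e + 1) (L + 1)) :
    Idn a b d c e L := by
  have c1 := contig (a := a) (b := b) (c := c) hd he (by rw [← hL]; exact h1)
  have c2 := contig (a := d - a) (b := d - b) (c := c) hd hl
    (by rw [show d + L - (d - a) - (d - b) - c = e - c by rw [hL]; ring]; exact h2)
  have hs := notPole_of_re_pos h1
  have hδ := notPole_of_re_pos h2
  unfold Idn at *
  rw [show L + 1 - c = (L - c) + 1 by ring, show e + 1 - c = (e - c) + 1 by ring,
    Complex.Gamma_add_one _ he.ne, Complex.Gamma_add_one _ hs.ne, Complex.Gamma_add_one _ hδ.ne,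
    Complex.Gamma_add_one _ hl.ne] at i1
  rw [show L + 1 - (c + 1) = L - c by ring, show e + 1 - (c + 1) = e - c by ring,
    Complex.Gamma_add_one _ he.ne, Complex.Gamma_add_one _ hl.ne] at i2
  apply mul_left_cancel₀ he.ne
  rw [c1, i1, i2]
  have n1 := he.ne
  have n2 := hs.ne
  have n3 := hδ.ne
  have n4 := hl.ne
  have n5 := hδ.Gamma_ne
  have n6 := hl.Gamma_ne
  apply mul_left_cancel₀ n4
  trans e * (Complex.Gamma e * Complex.Gamma (L - c) / (Complex.Gamma (e - c) * Complex.Gamma L)) *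
    (L * F32 (d - a) (d - b) c d L)
  · rw [c2]
    generalize F32 (d - a) (d - b) c d (L + 1) = X
    generalize F32 (d - a) (d - b) (c + 1) d (L + 1) = Y
    generalize hq : L - c = q at *
    generalize hp : e - c = p at *
    field_simp
  · ring

theorem Idn_all (N : ℕ) : ∀ {a b c d e L : ℂ} (_ : L = d + e - a - b) (_ : 0 < (L - c).re)
    (_ : 0 < (e - c).re) (_ : NotPole d) (_ : NotPole e) (_ : NotPole L)
    (_ : 0 < e.re + N) (_ : 0 < L.re + N), Idn a b d c e L := by
  induction N with
  | zero =>
    intro a b c d e L hL h1 h2 hd he hl h3 h4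
    exact main_pos hL h1 h2 hd (by simpa using h3) (by simpa using h4)
  | succ N ih =>
    intro a b c d e L hL h1 h2 hd he hl h3 h4
    push_cast at h3 h4
    simp only [Complex.sub_re] at h1 h2
    refine Idn_step hL (by simpa using h1) (by simpa using h2) hd he hl
      (ih ?_ ?_ ?_ hd he.add_one hl.add_one ?_ ?_) (ih ?_ ?_ ?_ hd he.add_one hl.add_one ?_ ?_)
    · rw [hL]; ring
    · simp; linarith
    · simp; linarith
    · simp; linarith
    · simp; linarith
    · rw [hL]; ring
    · simp; linarith
    · simp; linarith
    · simp; linarith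
    · simp; linarith

theorem F32_transformation_one_term (α₁ α₂ α₃ β₁ β₂ : ℂ)
    (h₁ : 0 < (β₁ + β₂ - α₁ - α₂ - α₃).re) (h₂ : 0 < (β₂ - α₃).re)
    (hβ₁ : NotPole β₁) (hβ₂ : NotPole β₂) (hl : NotPole (β₁ + β₂ - α₁ - α₂))
    (hg₁ : NotPole (β₁ + β₂ - α₁ - α₂ - α₃)) (hg₂ : NotPole (β₂ - α₃)) :
    F32 α₁ α₂ α₃ β₁ β₂ =
      Complex.Gamma β₂ * Complex.Gamma (β₁ + β₂ - α₁ - α₂ - α₃) /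
          (Complex.Gamma (β₂ - α₃) * Complex.Gamma (β₁ + β₂ - α₁ - α₂)) *
        F32 (β₁ - α₁) (β₁ - α₂) α₃ β₁ (β₁ + β₂ - α₁ - α₂) := by

  obtain ⟨N, hN⟩ := exists_nat_gt (max (-β₂.re) (-(β₁ + β₂ - α₁ - α₂).re))
  obtain ⟨h3, h4⟩ := max_lt_iff.1 hN
  exact Idn_all N rfl h₁ h₂ hβ₁ hβ₂ hl (by linarith) (by linarith)
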